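/- arXiv:2305.08403 — 3 statements merged into one kernel-verified Lean document; each statement's English description precedes it below -/
import Mathlib

section
/- Let 2 ≤ k₁ ≤ k₂ ≤ k₃ ≤ ⋯ be a nondecreasing sequence of positive integers. Then for any finite coloring of ℕ there exist positive integers d₁, d₂, d₃, … and a color γ such that for every n ∈ ℕ there exists a positive integer aₙ such that the set {aₙ + j₁d₁ + ⋯ + jₙdₙ | 0 ≤ j₁ ≤ k₁ − 1, …, 0 ≤ jₙ ≤ kₙ − 1} as well as the set {d₁, d₂, d₃, …} are all monochromatic with the color γ. -/
/-- Piecewise syndetic sets of natural numbers. -/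
def PSyn (B : Set ℕ) : Prop := ∃ r : ℕ, ∀ L : ℕ, ∃ y : ℕ, ∀ z ≤ L, ∃ t ≤ r, y + z + t ∈ B

theorem PSyn.union {B C : Set ℕ} (h : PSyn (B ∪ C)) : PSyn B ∨ PSyn C := by
  by_cases hB : PSyn B
  · exact Or.inl hB
  right
  obtain ⟨r, h⟩ := h
  refine ⟨r, fun L => ?_⟩
  unfold PSyn at hB
  push Not at hB
  obtain ⟨L', hL'⟩ := hB (L + r)
  obtain ⟨y, hy⟩ := h (L' + L)
  obtain ⟨z0, hz0, hz⟩ := hL' y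
  refine ⟨y + z0, fun z hzL => ?_⟩
  obtain ⟨t, ht, hm⟩ := hy (z0 + z) (by omega)
  refine ⟨t, ht, ?_⟩
  rcases hm with hm | hm
  · exfalso
    apply hz (z + t) (by omega)
    have e : y + z0 + (z + t) = y + (z0 + z) + t := by ring
    rw [e]; exact hm
  · have e : y + z0 + z + t = y + (z0 + z) + t := by ring
    rw [e]; exact hm

theorem PSyn.nonempty {B : Set ℕ} (h : PSyn B) : B.Nonempty := by
  obtain ⟨r, h⟩ := h
  obtain ⟨y, hy⟩ := h 0
  obtain ⟨t, _, ht⟩ := hy 0 le_rfl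
  exact ⟨_, ht⟩

theorem PSyn.biUnion {ι : Type*} (s : Finset ι) (B : ι → Set ℕ)
    (h : PSyn {n | ∃ i ∈ s, n ∈ B i}) : ∃ i ∈ s, PSyn (B i) := by
  classical
  induction s using Finset.induction_on with
  | empty =>
    obtain ⟨n, i, hi, _⟩ := h.nonempty
    simp at hi
  | insert a s ha ih =>
    have e : {n | ∃ i ∈ insert a s, n ∈ B i} = B a ∪ {n | ∃ i ∈ s, n ∈ B i} := by
      ext n; simp
    rw [e] at h
    rcases h.union with h | h
    · exact ⟨a, by simp, h⟩
    · obtain ⟨i, hi, hB⟩ := ih h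
      exact ⟨i, by simp [hi], hB⟩

theorem exists_FS_of_thick (T : Set ℕ) (hT : ∀ L : ℕ, ∃ y : ℕ, ∀ z ≤ L, y + z ∈ T) :
    ∃ a : Stream' ℕ, Hindman.FS a ⊆ T := by
  choose f hf using hT
  let S : ℕ → ℕ := fun n => Nat.rec 0 (fun _ s => s + f s) n
  have hS : ∀ n, S (n + 1) = S n + f (S n) := fun n => rfl
  let x : Stream' ℕ := fun n => f (S n)
  have key : ∀ (a : Stream' ℕ) (m : ℕ), Hindman.FS a m →
      ∀ n, a = x.drop n → ∀ s ≤ S n, m + s ∈ T := by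
    intro a m h
    induction h with
    | head' a =>
      rintro n rfl s hs
      have e : (x.drop n).head = f (S n) := by
        rw [Stream'.head_drop]; rfl
      rw [e]; exact hf _ _ hs
    | tail' a m _ ih =>
      rintro n rfl s hs
      refine ih (n + 1) ?_ s (by rw [hS]; omega)
      rw [Stream'.tail_drop']
    | cons' a m _ ih =>
      rintro n rfl s hs
      have e : (x.drop n).head = f (S n) := by
        rw [Stream'.head_drop]; rfl
      have := ih (n + 1) (by rw [Stream'.tail_drop']) (s + f (S n)) (by rw [hS]; omega)
      rw [e]
      have e2 : f (S n) + m + s = m + (s + f (S n)) := by ring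
      rw [e2]; exact this
  refine ⟨x, fun m hm => ?_⟩
  exact key x m hm 0 rfl 0 (Nat.zero_le _)

theorem PSyn.step (x : Stream' ℕ) (B : Set ℕ) (m : ℕ) (h : PSyn B) :
    ∃ d ∈ Hindman.FS x, PSyn {b | ∀ j ≤ m, b + j * d ∈ B} := by
  classical
  obtain ⟨r, h⟩ := h
  obtain ⟨ι, _, hι⟩ := Combinatorics.Line.exists_mono_in_high_dimension (Fin (m + 1)) (Fin (r + 1))
  let e : ι → ℕ := fun i => (Fintype.equivFin ι i : ℕ)
  have he : Function.Injective e :=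
    fun a b hab => (Fintype.equivFin ι).injective (Fin.ext hab)
  let u : ι → ℕ := fun i => x.get (e i)
  let D : Finset (Finset ι) := Finset.univ.filter (fun s => s.Nonempty)
  have hD : ∀ s ∈ D, ∑ i ∈ s, u i ∈ Hindman.FS x := by
    intro s hs
    have hs' : s.Nonempty := by simpa [D] using hs
    have := Hindman.FS.finsetSum x (s.image e) (hs'.image e)
    rwa [Finset.sum_image (fun a _ b _ hab => he hab)] at this
  have hU : PSyn {n | ∃ s ∈ D, n ∈ {b | ∀ j ≤ m, b + j * (∑ i ∈ s, u i) ∈ B}} := by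
    let M := ∑ i, m * u i
    refine ⟨M + r, fun L => ?_⟩
    obtain ⟨y, hy⟩ := h (L + M)
    refine ⟨y, fun z hz => ?_⟩
    have hy' : ∀ w : ℕ, ∃ t : Fin (r + 1), w ≤ L + M → y + w + t ∈ B := by
      intro w
      by_cases hw : w ≤ L + M
      · obtain ⟨t, ht, hB⟩ := hy w hw
        exact ⟨⟨t, by omega⟩, fun _ => hB⟩
      · exact ⟨0, fun h => absurd h hw⟩
    choose τ hτ using hy'
    obtain ⟨l, c, hl⟩ := hι (fun v => τ (z + ∑ i, (v i : ℕ) * u i))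
    let s : Finset ι := Finset.univ.filter (fun i => l.idxFun i = none)
    have hv : ∀ v : ι → Fin (m + 1), ∑ i, (v i : ℕ) * u i ≤ M := fun v =>
      Finset.sum_le_sum (fun i _ => Nat.mul_le_mul_right _ (by have := (v i).2; omega))
    have hval : ∀ j : Fin (m + 1), ∑ i, (l j i : ℕ) * u i
        = ∑ i, (l 0 i : ℕ) * u i + j * ∑ i ∈ s, u i := by
      intro j
      rw [Finset.sum_filter, Finset.mul_sum, ← Finset.sum_add_distrib]
      refine Finset.sum_congr rfl fun i _ => ?_
      cases hi : l.idxFun i <;> simp [hi]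
    refine ⟨∑ i, (l 0 i : ℕ) * u i + c, ?_, s, ?_, ?_⟩
    · have := hv (l 0)
      have := c.2
      omega
    · obtain ⟨i, hi⟩ := l.proper
      simp only [D, Finset.mem_filter, Finset.mem_univ, true_and]
      exact ⟨i, by simp [s, hi]⟩
    · intro j hj
      have h1 := hτ (z + ∑ i, (l ⟨j, by omega⟩ i : ℕ) * u i)
        (by have := hv (l ⟨j, by omega⟩); omega)
      have h2 := hl ⟨j, by omega⟩
      simp only at h2
      rw [h2, hval] at h1
      convert h1 using 1
      simp only
      ring
  obtain ⟨s, hs, hP⟩ := PSyn.biUnion D _ hU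
  exact ⟨_, hD s hs, hP⟩


/-- **Infinitary Brauer–Schur theorem.**
Let `2 ≤ k₁ ≤ k₂ ≤ ⋯` be a nondecreasing sequence of positive integers. Then for any
finite coloring `χ` of the positive integers (with colors `{1,…,c}`) there exist positive
integers `d₁, d₂, …` and a color `γ` such that for every `n ≥ 1` there exists a positive
integer `aₙ` such that the set
`{aₙ + j₁d₁ + ⋯ + jₙdₙ | 0 ≤ jᵢ ≤ kᵢ − 1}` as well as `{d₁, d₂, …}`
are monochromatic with the color `γ`. -/
theorem infinitary_brauer_schur
    (k : ℕ → ℕ) (hk2 : 2 ≤ k 1) (hkmono : ∀ i, 1 ≤ i → k i ≤ k (i + 1))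
    (c : ℕ) (hc : 1 ≤ c)
    (χ : ℕ → ℕ) (hχ : ∀ m, 1 ≤ m → χ m ∈ Finset.Icc 1 c) :
    ∃ (d : ℕ → ℕ) (γ : ℕ), γ ∈ Finset.Icc 1 c ∧
      (∀ i, 1 ≤ i → 0 < d i) ∧
      (∀ i, 1 ≤ i → χ (d i) = γ) ∧
      (∀ n, 1 ≤ n → ∃ a : ℕ, 0 < a ∧
        ∀ x : ℕ → ℕ, (∀ i, 1 ≤ i → i ≤ n → x i ≤ k i - 1) →
          χ (a + ∑ i ∈ Finset.Icc 1 n, x i * d i) = γ) := by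
  classical
  let A : ℕ → Set ℕ := fun γ => {m | 0 < m ∧ χ m = γ}
  let N : Finset ℕ := (Finset.Icc 1 c).filter (fun γ => ¬ PSyn (A γ))
  have hN : ¬ PSyn {n | ∃ γ ∈ N, n ∈ A γ} := by
    intro h
    obtain ⟨γ, hγ, hP⟩ := PSyn.biUnion N A h
    exact (Finset.mem_filter.1 hγ).2 hP
  obtain ⟨a, ha⟩ := exists_FS_of_thick {m | 0 < m ∧ ¬ ∃ γ ∈ N, m ∈ A γ} (by
    intro L
    unfold PSyn at hN
    push Not at hN
    obtain ⟨L', h⟩ := hN L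
    obtain ⟨z, _, hz⟩ := h 1
    refine ⟨1 + z, fun t ht => ⟨by omega, ?_⟩⟩
    exact hz t ht)
  obtain ⟨C, hC, x, hx⟩ := Hindman.FS_partition_regular a
    (Set.image A {γ | γ ∈ Finset.Icc 1 c ∧ PSyn (A γ)})
    (((Finset.Icc 1 c).finite_toSet.subset (fun γ h => h.1)).image A) (by
      intro m hm
      obtain ⟨hm0, hm1⟩ := ha hm
      refine ⟨A (χ m), ⟨χ m, ⟨hχ m hm0, ?_⟩, rfl⟩, hm0, rfl⟩
      by_contra hP
      exact hm1 ⟨χ m, Finset.mem_filter.2 ⟨hχ m hm0, hP⟩, hm0, rfl⟩)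
  obtain ⟨γ, ⟨hγ, hP⟩, rfl⟩ := hC
  choose D hDx hDP using fun (B : {B : Set ℕ // PSyn B}) (m : ℕ) => PSyn.step x B.1 m B.2
  let B : ℕ → {B : Set ℕ // PSyn B} := fun n =>
    Nat.rec ⟨A γ, hP⟩ (fun n B => ⟨_, hDP B (k (n + 1) - 1)⟩) n
  let d : ℕ → ℕ := fun n => D (B (n - 1)) (k n - 1)
  have hB : ∀ n b, b ∈ (B (n + 1)).1 →
      ∀ j ≤ k (n + 1) - 1, b + j * d (n + 1) ∈ (B n).1 := fun n b hb => hb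
  have hd : ∀ i, d i ∈ A γ := fun i => hx (hDx _ _)
  have main : ∀ n b, b ∈ (B n).1 →
      ∀ x : ℕ → ℕ, (∀ i, 1 ≤ i → i ≤ n → x i ≤ k i - 1) →
        b + ∑ i ∈ Finset.Icc 1 n, x i * d i ∈ A γ := by
    intro n
    induction n with
    | zero =>
      intro b hb x _
      have hb0 : b ∈ A γ := hb
      simpa using hb0
    | succ n ih =>
      intro b hb x hx
      have := ih _ (hB n b hb (x (n + 1)) (hx _ (by omega) le_rfl)) x
        (fun i h1 h2 => hx i h1 (by omega))
      rw [Finset.sum_Icc_succ_top (by omega)]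
      convert this using 1
      ring
  refine ⟨d, γ, hγ, fun i _ => (hd i).1, fun i _ => (hd i).2, fun n _ => ?_⟩
  obtain ⟨b, hb⟩ := (B n).2.nonempty
  refine ⟨b, ?_, fun x hx => (main n b hb x hx).2⟩
  have := (main n b hb (fun _ => 0) (by simp)).1
  simpa using this
end

section
/- Let 2 ≤ k₁ ≤ k₂ ≤ k₃ ≤ ⋯ be a nondecreasing sequence of positive integers. Then for any finite coloring of ℕ there exist positive integers d₁, d₂, d₃, … and a color γ such that for every n ∈ ℕ there exists a positive integer aₙ such that the set {aₙ + j₁d₁ + ⋯ + jₙdₙ | 0 ≤ j₁ ≤ k₁ − 1, …, 0 ≤ jₙ ≤ kₙ − 1} is monochromatic with the color γ. -/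
/-- One van der Waerden step, with bounds, from Hales-Jewett. -/
lemma vdw_bound (K : ℕ) (f : ℕ → ℕ) (hf : (Set.range f).Finite) :
    ∃ B : ℕ, ∀ m, ∃ o d : ℕ, o ≤ B ∧ 0 < d ∧ d ≤ B ∧ ∀ j ≤ K, f (m + o + j * d) = f (m + o) := by
  classical
  have : Finite (Set.range f) := hf
  obtain ⟨ι, _, hι⟩ :=
    Combinatorics.Line.exists_mono_in_high_dimension (Fin (K+1)) (Set.range f)
  refine ⟨Fintype.card ι * (K + 1), fun m => ?_⟩
  obtain ⟨l, c, hl⟩ := hι (fun v => ⟨f (m + ∑ i, (v i : ℕ)), _, rfl⟩)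
  obtain ⟨i0, hi0⟩ := l.proper
  have key : ∀ j : Fin (K+1), ∑ i, (l j i : ℕ) = ∑ i, (l 0 i : ℕ) +
      j * (Finset.univ.filter (fun i => l.idxFun i = none)).card := by
    intro j
    rw [Finset.card_filter, Finset.mul_sum, ← Finset.sum_add_distrib]
    refine Finset.sum_congr rfl fun i _ => ?_
    rcases h : l.idxFun i with _ | a <;> simp [h]
  have hc : ∀ j : Fin (K+1), f (m + ∑ i, (l j i : ℕ)) = c := fun j =>
    congrArg Subtype.val (hl j)
  refine ⟨∑ i, (l 0 i : ℕ), (Finset.univ.filter (fun i => l.idxFun i = none)).card, ?_, ?_, ?_, ?_⟩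
  · calc ∑ i, (l 0 i : ℕ) ≤ ∑ i : ι, (K + 1) := Finset.sum_le_sum fun i _ => (l 0 i).is_lt.le
      _ = _ := by simp
  · exact Finset.card_pos.2 ⟨i0, by simp [hi0]⟩
  · exact (Finset.card_le_univ _).trans (Nat.le_mul_of_pos_right _ (by omega))
  · intro j hj
    have h1 := hc ⟨j, by omega⟩
    rw [key] at h1
    rw [hc 0, ← h1, add_assoc]

lemma vdw_step (K : ℕ) (f : ℕ → ℕ) (hf : (Set.range f).Finite) :
    ∃ (f' : ℕ → ℕ) (B : ℕ), (Set.range f').Finite ∧ ∀ m, ∃ o d : ℕ, 0 < d ∧ d ≤ B ∧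
      ∀ m', f' m' = f' m → ∀ j ≤ K, f (m' + o + j * d) = f (m + o) := by
  obtain ⟨B, hB⟩ := vdw_bound K f hf
  choose o d ho hd hdB h using hB
  refine ⟨fun m => Nat.pair (f (m + o m)) (Nat.pair (o m) (d m)), B, ?_, fun m =>
    ⟨o m, d m, hd m, hdB m, ?_⟩⟩
  · refine ((hf.prod ((Set.finite_Iic B).prod (Set.finite_Iic B))).image
      (fun p : ℕ × ℕ × ℕ => Nat.pair p.1 (Nat.pair p.2.1 p.2.2))).subset ?_
    rintro _ ⟨m, rfl⟩
    exact ⟨(f (m + o m), o m, d m), ⟨⟨_, rfl⟩, ho m, hdB m⟩, rfl⟩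
  · intro m' hm j hj
    simp only [Nat.pair_eq_pair] at hm
    obtain ⟨h1, h2, h3⟩ := hm
    rw [← h1, ← h m' j hj, h2, h3]

lemma vdw_iter (K : ℕ → ℕ) (f : ℕ → ℕ) (hf : (Set.range f).Finite) :
    ∃ B : ℕ → ℕ, ∀ n, ∃ (d : ℕ → ℕ) (s : ℕ), (∀ i, 0 < d i ∧ d i ≤ B i) ∧
      ∀ x : ℕ → ℕ, (∀ i, 1 ≤ i → i ≤ n → x i ≤ K i) →
        f (s + ∑ i ∈ Finset.Icc 1 n, x i * d i) = f s := by
  choose! F b hF hstep using vdw_step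
  let G : ℕ → ℕ → ℕ := fun n => Nat.rec f (fun n g => F (K (n+1)) g) n
  have hG : ∀ n, (Set.range (G n)).Finite := by
    intro n
    induction n with
    | zero => exact hf
    | succ n ih => exact hF _ _ ih
  let B : ℕ → ℕ := fun i => b (K i) (G (i-1)) + 1
  have main : ∀ n m, ∃ (d : ℕ → ℕ) (s : ℕ), (∀ i, 0 < d i ∧ d i ≤ B i) ∧
      ∀ m', G n m' = G n m → ∀ x : ℕ → ℕ, (∀ i, 1 ≤ i → i ≤ n → x i ≤ K i) →
        f (m' + s + ∑ i ∈ Finset.Icc 1 n, x i * d i) = f (m + s) := by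
    intro n
    induction n with
    | zero =>
      intro m
      refine ⟨fun _ => 1, 0, fun i => ⟨one_pos, by simp [B]⟩, ?_⟩
      intro m' h x _
      simpa [G] using h
    | succ n ih =>
      intro m
      obtain ⟨o, e, he, heB, h⟩ := hstep (K (n+1)) (G n) (hG n) m
      obtain ⟨d, s, hd, hs⟩ := ih (m + o)
      refine ⟨Function.update d (n+1) e, o + s, ?_, ?_⟩
      · intro i
        by_cases hi : i = n + 1
        · subst hi
          simp only [Function.update_self, B, Nat.add_sub_cancel]
          omega
        · simpa [Function.update_of_ne hi] using hd i
      · intro m' hm' x hx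
        have h1 := hs _ (h m' hm' (x (n+1)) (hx _ (by omega) le_rfl)) x
          (fun i hi hi' => hx i hi (by omega))
        rw [Finset.sum_Icc_succ_top (by omega), Function.update_self]
        have h2 : ∑ i ∈ Finset.Icc 1 n, x i * Function.update d (n+1) e i =
            ∑ i ∈ Finset.Icc 1 n, x i * d i := by
          refine Finset.sum_congr rfl fun i hi => ?_
          rw [Function.update_of_ne]
          have := (Finset.mem_Icc.1 hi).2
          omega
        rw [h2, ← add_assoc m, ← h1]
        congr 1
        ring
  refine ⟨B, fun n => ?_⟩
  obtain ⟨d, s, hd, hs⟩ := main n 0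
  exact ⟨d, s, hd, fun x hx => by simpa using hs 0 rfl x hx⟩

lemma ultra_lim (U : Ultrafilter ℕ) (g : ℕ → ℕ) (B : ℕ) (h : ∀ n, g n ≤ B) :
    ∃ v, ∀ᶠ n in (U : Filter ℕ), g n = v := by
  have : (⋃ v ∈ Set.Iic B, {n | g n = v}) ∈ U := by
    have e : (⋃ v ∈ Set.Iic B, {n | g n = v}) = Set.univ := by
      ext n
      simpa using h n
    rw [e]
    exact Filter.univ_mem
  obtain ⟨v, -, hv⟩ := (Ultrafilter.finite_biUnion_mem_iff (Set.finite_Iic B)).1 this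
  exact ⟨v, hv⟩

/-- **Infinitary van der Waerden theorem.**
Let `2 ≤ k₁ ≤ k₂ ≤ ⋯` be a nondecreasing sequence of positive integers. Then for any
finite coloring `χ` of the positive integers (with colors `{1,…,c}`) there exist positive
integers `d₁, d₂, …` and a color `γ` such that for every `n ≥ 1` there exists a positive
integer `aₙ` such that the set
`{aₙ + j₁d₁ + ⋯ + jₙdₙ | 0 ≤ jᵢ ≤ kᵢ − 1}` is monochromatic with the color `γ`. -/
theorem infinitary_van_der_waerden
    (k : ℕ → ℕ) (hk2 : 2 ≤ k 1) (hkmono : ∀ i, 1 ≤ i → k i ≤ k (i + 1))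
    (c : ℕ) (hc : 1 ≤ c)
    (χ : ℕ → ℕ) (hχ : ∀ m, 1 ≤ m → χ m ∈ Finset.Icc 1 c) :
    ∃ (d : ℕ → ℕ) (γ : ℕ), γ ∈ Finset.Icc 1 c ∧
      (∀ i, 1 ≤ i → 0 < d i) ∧
      (∀ n, 1 ≤ n → ∃ a : ℕ, 0 < a ∧
        ∀ x : ℕ → ℕ, (∀ i, 1 ≤ i → i ≤ n → x i ≤ k i - 1) →
          χ (a + ∑ i ∈ Finset.Icc 1 n, x i * d i) = γ) := by
  have hf : (Set.range (fun m => χ (1 + m))).Finite := by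
    refine (Finset.Icc 1 c).finite_toSet.subset ?_
    rintro _ ⟨m, rfl⟩
    exact hχ _ (by omega)
  obtain ⟨B, hB⟩ := vdw_iter (fun i => k i - 1) _ hf
  choose D s hD hs using hB
  let U : Ultrafilter ℕ := Filter.hyperfilter ℕ
  have hU : ∀ n : ℕ, ∀ᶠ N in (U : Filter ℕ), n ≤ N := fun n =>
    Nat.hyperfilter_le_atTop (Filter.eventually_ge_atTop n)
  choose d hd using fun i => ultra_lim U (fun n => D n i) (B i) (fun n => (hD n i).2)
  obtain ⟨γ, hγ⟩ := ultra_lim U (fun n => χ (1 + s n)) c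
    (fun n => (Finset.mem_Icc.1 (hχ _ (by omega))).2)
  refine ⟨d, γ, ?_, ?_, ?_⟩
  · obtain ⟨N, hN⟩ := hγ.exists
    exact hN ▸ hχ _ (by omega)
  · intro i _
    obtain ⟨N, hN⟩ := (hd i).exists
    exact hN ▸ (hD N i).1
  · intro n _
    have hall : ∀ᶠ N in (U : Filter ℕ), ∀ i ∈ Finset.Icc 1 n, D N i = d i :=
      (Filter.eventually_all_finset _).2 fun i _ => hd i
    obtain ⟨N, ⟨h1, h2⟩, h3⟩ := ((hall.and hγ).and (hU n)).exists
    refine ⟨1 + s N, by omega, fun x hx => ?_⟩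
    have h4 := hs N (fun i => if i ≤ n then x i else 0) (by
      intro i hi _
      split_ifs with h
      · exact hx i hi h
      · exact Nat.zero_le _)
    rw [← h2]
    rw [← h4, ← add_assoc]
    congr 2
    rw [← Finset.sum_subset (Finset.Icc_subset_Icc_right h3)]
    · refine Finset.sum_congr rfl fun i hi => ?_
      rw [h1 i hi, if_pos (Finset.mem_Icc.1 hi).2]
    · intro i hi hi'
      rw [Finset.mem_Icc] at hi hi'
      rw [if_neg (by omega), zero_mul]
end

section
/- Let a ∈ ℕ, c ≥ 1, and let 2 ≤ k₁ ≤ k₂ ≤ ⋯ be a nondecreasing sequence of positive integers. Define W₀ = 1 and Wᵢ = W(kᵢ, c^{W₁⋯W_{i−1}}) for i ∈ ℕ. Let l₁, l₂, … be positive integers with l₁ > 0 and, for i ≥ 2, lᵢ > (W₁−1)l₁ + ⋯ + (W_{i−1}−1)l_{i−1}. For i ∈ ℕ set Aᵢ = {a + x₁l₁ + ⋯ + xᵢlᵢ | 0 ≤ x₁ ≤ W₁−1, …, 0 ≤ xᵢ ≤ Wᵢ−1} and A = ⋃_{i∈ℕ} Aᵢ. Then for any c-coloring of A there exist positive integers aᵢ,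 dᵢ (i ∈ ℕ), with dᵢ = αᵢlᵢ for some positive integer αᵢ satisfying 1 ≤ αᵢ ≤ ⌊(Wᵢ−1)/(kᵢ−1)⌋, such that the sets {aᵢ + x₁d₁ + ⋯ + xᵢdᵢ | 0 ≤ x₁ ≤ k₁−1, …, 0 ≤ xᵢ ≤ kᵢ−1} for all i ∈ ℕ are monochromatic with the same color. -/
/-- `n` witnesses the van der Waerden property for `k` and `c`: every coloring of
`{1,…,n}` with colors `{1,…,c}` contains a monochromatic arithmetic progression of
length `k` inside `{1,…,n}`. -/
def IsVdWWitness (k c n : ℕ) : Prop :=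
  ∀ χ : ℕ → ℕ, (∀ m, χ m ∈ Finset.Icc 1 c) →
    ∃ a d : ℕ, 0 < a ∧ 0 < d ∧ a + (k - 1) * d ≤ n ∧
      ∃ γ, ∀ j < k, χ (a + j * d) = γ

/-- The van der Waerden number `W(k,c)`: the least `n` such that every `c`-coloring of
`{1,…,n}` contains a monochromatic arithmetic progression of length `k`. -/
noncomputable def vdWNumber (k c : ℕ) : ℕ := sInf {n | IsVdWWitness k c n}

theorem exists_vdw_witness (k c : ℕ) (hk : 2 ≤ k) : ∃ n, IsVdWWitness k c n := by
  obtain ⟨ι, hι, h⟩ := Combinatorics.Line.exists_mono_in_high_dimension (Fin k) (Finset.Icc 1 c)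
  refine ⟨1 + Fintype.card ι * (k - 1), fun χ hχ => ?_⟩
  obtain ⟨L, γ, hL⟩ := h (fun v => ⟨χ (1 + ∑ i, (v i : ℕ)), hχ _⟩)
  classical
  have hsum : ∀ x : Fin k, ∑ i, (L x i : ℕ) =
      (∑ i, ((L.idxFun i).map (fun y : Fin k => (y : ℕ))).getD 0) +
        (x : ℕ) * (Finset.univ.filter (fun i => L.idxFun i = none)).card := by
    intro x
    rw [Finset.card_filter, Finset.mul_sum, ← Finset.sum_add_distrib]
    refine Finset.sum_congr rfl fun i _ => ?_
    rcases hi : L.idxFun i with _ | y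
    · simp [Combinatorics.Line.coe_apply, hi]
    · simp [Combinatorics.Line.coe_apply, hi]
  set s := ∑ i, ((L.idxFun i).map (fun y : Fin k => (y : ℕ))).getD 0
  set d := (Finset.univ.filter (fun i => L.idxFun i = none)).card with hd
  refine ⟨1 + s, d, by omega, ?_, ?_, γ, ?_⟩
  · rw [hd, Finset.card_pos]
    obtain ⟨i, hi⟩ := L.proper
    exact ⟨i, by simpa using hi⟩
  · have h1 := hsum ⟨k - 1, by omega⟩
    have h2 : ∑ i, (L ⟨k - 1, by omega⟩ i : ℕ) ≤ ∑ _i : ι, (k - 1) :=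
      Finset.sum_le_sum fun i _ => by have := (L ⟨k - 1, by omega⟩ i).2; omega
    simp only [Finset.sum_const, Finset.card_univ, smul_eq_mul] at h2
    simp only at h1
    omega
  · intro j hj
    have h1 := congrArg Subtype.val (hL ⟨j, hj⟩)
    simp only [hsum] at h1
    rw [← h1, add_assoc]

theorem vdw_spec (k c : ℕ) (hk : 2 ≤ k) : IsVdWWitness k c (vdWNumber k c) :=
  Nat.sInf_mem (s := {n | IsVdWWitness k c n}) (exists_vdw_witness k c hk)

/-- Witness property for colorings by an arbitrary finite type. -/
theorem vdw_type {T : Type} [Fintype T] (k n : ℕ) (h : IsVdWWitness k (Fintype.card T) n)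
    (f : ℕ → T) :
    ∃ y d : ℕ, 0 < d ∧ y + (k - 1) * d + 1 ≤ n ∧ ∀ j < k, f (y + j * d) = f y := by
  let e := Fintype.equivFin T
  obtain ⟨a, d, ha, hd, hle, γ, hγ⟩ := h (fun m => (e (f (m - 1)) : ℕ) + 1) (fun m => by
    have := (e (f (m - 1))).2
    simp only [Finset.mem_Icc]; omega)
  refine ⟨a - 1, d, hd, by omega, fun j hj => ?_⟩
  have h1 := hγ j hj
  have h0 := hγ 0 (by omega)
  apply e.injective
  apply Fin.ext
  rw [show a - 1 + j * d = a + j * d - 1 by omega]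
  simp only [zero_mul, add_zero] at h0
  omega

theorem finite_vdw (c : ℕ) (k W l : ℕ → ℕ) (χ : ℕ → Fin c)
    (hW : ∀ i, 1 ≤ i → IsVdWWitness (k i) (c ^ ∏ j ∈ Finset.Icc 1 (i - 1), W j) (W i))
    (hk : ∀ i, 1 ≤ i → 2 ≤ k i) (n : ℕ) : ∀ a : ℕ,
    ∃ (z α : ℕ → ℕ) (γ : Fin c),
      (∀ j, 1 ≤ j → j ≤ n → 1 ≤ α j ∧ z j + (k j - 1) * α j + 1 ≤ W j) ∧
      ∀ x : ℕ → ℕ, (∀ j, 1 ≤ j → j ≤ n → x j ≤ k j - 1) →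
        χ (a + ∑ j ∈ Finset.Icc 1 n, (z j + x j * α j) * l j) = γ := by
  induction n with
  | zero =>
    intro a
    exact ⟨0, 0, χ a, fun j h1 h2 => by omega, fun x _ => by simp⟩
  | succ n ih =>
    intro a
    have hw := hW (n + 1) (by omega)
    let T := ((j : Finset.Icc 1 n) → Fin (W j)) → Fin c
    have hT : Fintype.card T = c ^ ∏ j ∈ Finset.Icc 1 (n + 1 - 1), W j := by
      simp only [T, Fintype.card_fun, Fintype.card_pi, Fintype.card_fin, Nat.add_sub_cancel]
      rw [Finset.prod_coe_sort (Finset.Icc 1 n) W]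
    rw [← hT] at hw
    obtain ⟨y, d, hd, hle, hy⟩ := vdw_type (T := T) (k (n + 1)) (W (n + 1)) hw
      (fun m x => χ (a + m * l (n + 1) + ∑ j : Finset.Icc 1 n, (x j : ℕ) * l j))
    obtain ⟨z, α, γ, h1, h2⟩ := ih (a + y * l (n + 1))
    refine ⟨fun j => if j = n + 1 then y else z j, fun j => if j = n + 1 then d else α j, γ,
      ?_, ?_⟩
    · intro j hj1 hj2
      by_cases hj : j = n + 1
      · subst hj; simpa using ⟨hd, hle⟩
      · simpa [hj] using h1 j hj1 (by omega)
    · intro x hx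
      rw [Finset.sum_Icc_succ_top (by omega)]
      have hs : ∑ j ∈ Finset.Icc 1 n, ((if j = n + 1 then y else z j) +
          x j * (if j = n + 1 then d else α j)) * l j =
          ∑ j ∈ Finset.Icc 1 n, (z j + x j * α j) * l j := by
        refine Finset.sum_congr rfl fun j hj => ?_
        have : j ≠ n + 1 := by rw [Finset.mem_Icc] at hj; omega
        simp [this]
      simp only [hs, if_true]
      have hb : ∀ j : Finset.Icc 1 n, z j + x j * α j < W j := by
        rintro ⟨j, hj⟩
        rw [Finset.mem_Icc] at hj
        have e1 := (h1 j hj.1 hj.2).2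
        have e2 := Nat.mul_le_mul_right (α j) (hx j hj.1 (by omega))
        simp only
        omega
      have hk' := hk (n + 1) (by omega)
      have hxn := hx (n + 1) (by omega) le_rfl
      have h3 := congrFun (hy (x (n + 1)) (by omega)) (fun j => ⟨z j + x j * α j, hb j⟩)
      simp only at h3
      rw [Finset.sum_coe_sort (Finset.Icc 1 n) (fun j => (z j + x j * α j) * l j)] at h3
      rw [h2 x (fun j a b => hx j a (by omega))] at h3
      rw [← h3]
      congr 1
      ring

theorem ultra_const (U : Ultrafilter ℕ) (B : ℕ) (f : ℕ → ℕ) (h : ∀ᶠ n in U, f n ≤ B) :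
    ∃ v, ∀ᶠ n in U, f n = v := by
  have : ∀ᶠ n in U, ∃ v ∈ Set.Iic B, f n = v := h.mono fun n hn => ⟨_, hn, rfl⟩
  rw [Ultrafilter.eventually_exists_mem_iff (Set.finite_Iic B)] at this
  obtain ⟨v, _, hv⟩ := this
  exact ⟨v, hv⟩

/-- **Theorem 2.2 (generalized infinitary van der Waerden theorem).**
Let `a ≥ 1`, `c ≥ 1`, `2 ≤ k₁ ≤ k₂ ≤ ⋯`, `W₀ = 1`, `Wᵢ = W(kᵢ, c^{W₁⋯W_{i−1}})`, and let
`l₁, l₂, …` be positive with `l₁ > 0` and `lᵢ > (W₁−1)l₁ + ⋯ + (W_{i−1}−1)l_{i−1}` for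
`i ≥ 2`. Set `Aᵢ = {a + x₁l₁ + ⋯ + xᵢlᵢ | 0 ≤ xⱼ ≤ Wⱼ−1}` and `A = ⋃ᵢ Aᵢ`. Then for any
`c`-coloring `χ` of `A` there are positive integers `aᵢ, dᵢ` with `dᵢ = αᵢlᵢ`,
`1 ≤ αᵢ ≤ ⌊(Wᵢ−1)/(kᵢ−1)⌋`, such that all the sets
`{aᵢ + x₁d₁ + ⋯ + xᵢdᵢ | 0 ≤ xⱼ ≤ kⱼ−1}` are monochromatic with the same color. -/
theorem generalized_infinitary_vdw
    (a c : ℕ) (ha : 1 ≤ a) (hc : 1 ≤ c)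
    (k : ℕ → ℕ) (hk2 : 2 ≤ k 1) (hkmono : ∀ i, 1 ≤ i → k i ≤ k (i + 1))
    (W : ℕ → ℕ) (hW0 : W 0 = 1)
    (hW : ∀ i, 1 ≤ i →
      W i = vdWNumber (k i) (c ^ ∏ j ∈ Finset.Icc 1 (i - 1), W j))
    (l : ℕ → ℕ) (hl1 : 0 < l 1) (hlpos : ∀ i, 1 ≤ i → 0 < l i)
    (hl : ∀ i, 2 ≤ i →
      (∑ j ∈ Finset.Icc 1 (i - 1), (W j - 1) * l j) < l i)
    (A : Set ℕ)
    (hA : A = {m | ∃ i, 1 ≤ i ∧ ∃ x : ℕ → ℕ,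
      (∀ j ∈ Finset.Icc 1 i, x j ≤ W j - 1) ∧ m = a + ∑ j ∈ Finset.Icc 1 i, x j * l j})
    (χ : ℕ → ℕ) (hχ : ∀ m ∈ A, χ m ∈ Finset.Icc 1 c) :
    ∃ (a' : ℕ → ℕ) (α : ℕ → ℕ) (γ : ℕ),
      (∀ i, 1 ≤ i → 0 < a' i) ∧
      (∀ i, 1 ≤ i → 1 ≤ α i ∧ α i ≤ (W i - 1) / (k i - 1)) ∧
      (∀ i, 1 ≤ i → ∀ x : ℕ → ℕ, (∀ j, 1 ≤ j → j ≤ i → x j ≤ k j - 1) →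
        χ (a' i + ∑ j ∈ Finset.Icc 1 i, x j * (α j * l j)) = γ) := by
  have hk : ∀ i, 1 ≤ i → 2 ≤ k i := by
    intro i hi
    induction i, hi using Nat.le_induction with
    | base => exact hk2
    | succ i hi ih => exact ih.trans (hkmono i hi)
  have hWw : ∀ i, 1 ≤ i →
      IsVdWWitness (k i) (c ^ ∏ j ∈ Finset.Icc 1 (i - 1), W j) (W i) := by
    intro i hi
    have := vdw_spec (k i) (c ^ ∏ j ∈ Finset.Icc 1 (i - 1), W j) (hk i hi)
    rwa [← hW i hi] at this
  let χ' : ℕ → Fin c := fun m => if h : χ m - 1 < c then ⟨χ m - 1, h⟩ else ⟨0, hc⟩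
  have hχ' : ∀ m ∈ A, χ m = (χ' m : ℕ) + 1 := by
    intro m hm
    have h := hχ m hm
    rw [Finset.mem_Icc] at h
    have h' : χ m - 1 < c := by omega
    simp only [χ', h', dif_pos]
    omega
  choose z α γ h1 h2 using fun n => finite_vdw c k W l χ' hWw hk n a
  let U : Ultrafilter ℕ := Filter.hyperfilter ℕ
  have hU : ∀ i : ℕ, ∀ᶠ n in U, i ≤ n := by
    intro i
    have h : (U : Filter ℕ) ≤ Filter.atTop := Nat.hyperfilter_le_atTop
    exact h (Filter.eventually_ge_atTop i)
  have hdiv : ∀ n j, 1 ≤ j → j ≤ n → α n j ≤ (W j - 1) / (k j - 1) := by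
    intro n j hj hjn
    have := (h1 n j hj hjn).2
    have := hk j hj
    rw [Nat.le_div_iff_mul_le (by omega), mul_comm]
    omega
  have hα : ∀ j, ∃ v, 1 ≤ j → ∀ᶠ n in U, α n j = v := by
    intro j
    by_cases hj : 1 ≤ j
    · obtain ⟨v, hv⟩ := ultra_const U ((W j - 1) / (k j - 1)) (fun n => α n j)
        ((hU j).mono fun n hn => hdiv n j hj hn)
      exact ⟨v, fun _ => hv⟩
    · exact ⟨0, fun h => absurd h hj⟩
  choose β hβ using hα
  obtain ⟨g, hg⟩ := ultra_const U c (fun n => (γ n : ℕ))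
    (Filter.Eventually.of_forall fun n => (γ n).2.le)
  have hall : ∀ i, ∃ n, i ≤ n ∧ (γ n : ℕ) = g ∧ ∀ j ∈ Finset.Icc 1 i, α n j = β j := by
    intro i
    have h3 : ∀ᶠ n in U, ∀ j ∈ Finset.Icc 1 i, α n j = β j := by
      rw [Filter.eventually_all_finset]
      intro j hj
      exact hβ j (Finset.mem_Icc.1 hj).1
    obtain ⟨n, hn⟩ := ((hU i).and (hg.and h3)).exists
    exact ⟨n, hn⟩
  choose N hN1 hN2 hN3 using hall
  refine ⟨fun i => a + ∑ j ∈ Finset.Icc 1 (N i), z (N i) j * l j, β, g + 1, ?_, ?_, ?_⟩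
  · intro i _
    simp only
    omega
  · intro i hi
    have h3 := hN3 i i (Finset.mem_Icc.2 ⟨hi, le_rfl⟩)
    rw [← h3]
    exact ⟨(h1 _ i hi (hN1 i)).1, hdiv _ i hi (hN1 i)⟩
  · intro i hi x hx
    let x' : ℕ → ℕ := fun j => if j ≤ i then x j else 0
    have hx' : ∀ j, 1 ≤ j → j ≤ N i → x' j ≤ k j - 1 := by
      intro j hj _
      by_cases hji : j ≤ i
      · simpa [x', hji] using hx j hj hji
      · simp [x', hji]
    have hsum : ∑ j ∈ Finset.Icc 1 i, x j * (β j * l j) =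
        ∑ j ∈ Finset.Icc 1 (N i), x' j * (α (N i) j * l j) := by
      rw [← Finset.sum_subset (Finset.Icc_subset_Icc_right (hN1 i))]
      · refine Finset.sum_congr rfl fun j hj => ?_
        rw [hN3 i j hj]
        simp [x', (Finset.mem_Icc.1 hj).2]
      · intro j hj hj'
        have : ¬ j ≤ i := fun h => hj' (Finset.mem_Icc.2 ⟨(Finset.mem_Icc.1 hj).1, h⟩)
        simp [x', this]
    have heq : a + ∑ j ∈ Finset.Icc 1 (N i), z (N i) j * l j +
        ∑ j ∈ Finset.Icc 1 i, x j * (β j * l j) =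
        a + ∑ j ∈ Finset.Icc 1 (N i), (z (N i) j + x' j * α (N i) j) * l j := by
      rw [hsum, add_assoc, ← Finset.sum_add_distrib]
      congr 1
      exact Finset.sum_congr rfl fun j _ => by ring
    simp only [heq]
    rw [hχ', h2 (N i) x' hx', hN2]
    rw [hA]
    refine ⟨N i, hi.trans (hN1 i), _, ?_, rfl⟩
    intro j hj
    rw [Finset.mem_Icc] at hj
    have e1 := (h1 (N i) j hj.1 hj.2).2
    have e2 := Nat.mul_le_mul_right (α (N i) j) (hx' j hj.1 hj.2)
    omega
end
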